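/- arXiv:2511.16327 — 3 statements merged into one kernel-verified Lean document; each statement's English description precedes it below -/
import Mathlib

section
/- For all real numbers a, b with 0 < a < b, the function x ↦ (1 - exp(-a·x)) / (1 - exp(-b·x)) is strictly increasing on (0, ∞). -/
open Real Set

/-!
Put `u = exp (-b * x)` and `p = a / b`. Then `exp (-a * x) = u ^ p`, so the ratio is the slope of
the secant of `u ↦ u ^ p` through the fixed point `1` and the moving point `u`. If `0 < a < b`, the
power is strictly concave and `u` decreases with `x`; if `a < b < 0`, the power is strictly convex
and `u` increases with `x`. In both cases the slope increases with `x`.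
-/

theorem strictMonoOn_slope_rpow_one {p : ℝ} (hp : 1 < p) :
    StrictMonoOn (slope (fun u : ℝ => u ^ p) 1) (Ici 0 \ {1}) := by
  intro u hu v hv huv
  simpa only [slope_def_field] using (strictConvexOn_rpow hp).secant_strict_mono
    (mem_Ici.2 zero_le_one) hu.1 hv.1 hu.2 hv.2 huv

theorem strictAntiOn_slope_rpow_one {p : ℝ} (hp₀ : 0 < p) (hp₁ : p < 1) :
    StrictAntiOn (slope (fun u : ℝ => u ^ p) 1) (Ici 0 \ {1}) := by
  intro u hu v hv huv
  simpa only [slope_def_field] using (Real.strictConcaveOn_rpow hp₀ hp₁).secant_strict_mono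
    (mem_Ici.2 zero_le_one) hu.1 hv.1 hu.2 hv.2 huv

theorem slope_rpow_one_exp {b : ℝ} (hb : b ≠ 0) (a x : ℝ) :
    slope (fun u : ℝ => u ^ (a / b)) 1 (exp (-b * x)) =
      (1 - exp (-a * x)) / (1 - exp (-b * x)) := by
  have exp_rpow : exp (-b * x) ^ (a / b) = exp (-a * x) := by
    rw [← exp_mul]
    congr 1
    field_simp
  rw [slope_def_field, exp_rpow, one_rpow, ← neg_div_neg_eq, neg_sub, neg_sub]

theorem mapsTo_exp_mul_compl_zero {c : ℝ} (hc : c ≠ 0) :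
    MapsTo (fun x : ℝ => exp (c * x)) {0}ᶜ (Ici 0 \ {1}) := fun _ hx =>
  ⟨(exp_pos _).le, mt (exp_eq_one_iff _).1 (mul_ne_zero hc hx)⟩

theorem ratio_one_sub_exp_strictMonoOn_general {a b : ℝ} (hab₀ : 0 < a * b) (hab : a < b) :
    StrictMonoOn (fun x : ℝ => (1 - exp (-a * x)) / (1 - exp (-b * x))) {0}ᶜ := by
  have hb₀ : b ≠ 0 := right_ne_zero_of_mul hab₀.ne'
  have maps_exp := mapsTo_exp_mul_compl_zero (neg_ne_zero.2 hb₀)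
  simp only [← slope_rpow_one_exp hb₀]
  rcases pos_and_pos_or_neg_and_neg_of_mul_pos hab₀ with ⟨ha, hb⟩ | ⟨-, hb⟩
  · have exp_anti : StrictAnti fun x : ℝ => exp (-b * x) :=
      exp_strictMono.comp_strictAnti (strictMono_id.const_mul_of_neg (neg_neg_of_pos hb))
    exact (strictAntiOn_slope_rpow_one (div_pos ha hb) ((div_lt_one hb).2 hab)).comp
      (exp_anti.strictAntiOn _) maps_exp
  · have exp_mono : StrictMono fun x : ℝ => exp (-b * x) :=
      exp_strictMono.comp (strictMono_id.const_mul (neg_pos.2 hb))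
    exact (strictMonoOn_slope_rpow_one ((one_lt_div_of_neg hb).2 hab)).comp
      (exp_mono.strictMonoOn _) maps_exp

/-- For `0 < a < b`, the ratio `x ↦ (1 - exp(-a·x)) / (1 - exp(-b·x))` is
strictly increasing on `(0, ∞)`. -/
theorem ratio_one_sub_exp_strictMonoOn (a b : ℝ) (ha : 0 < a) (hab : a < b) :
    StrictMonoOn (fun x : ℝ => (1 - Real.exp (-a * x)) / (1 - Real.exp (-b * x))) (Ioi 0) :=
  (ratio_one_sub_exp_strictMonoOn_general (mul_pos ha (ha.trans hab)) hab).mono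
    fun _ hx => ne_of_gt hx
end

section
/- Let α > 0 and d₀ > 0 be real numbers with 4·α²·d₀ ≥ 1. Then the function f(s) = exp(2·α·s) / (s² + d₀) is strictly increasing on all of ℝ. -/
open Real

/-!
The derivative of `s ↦ exp (c * s) / (s ^ 2 + d)` has the sign of `c * (s ^ 2 + d) - 2 * s`, a
quadratic with discriminant `4 * (1 - c ^ 2 * d)`. In the critical case `c ^ 2 * d = 1` it still
has the double root `c⁻¹`, where the derivative vanishes; an isolated zero of the derivative does
not destroy strict monotonicity.
-/

theorem strictMono_of_deriv_pos_of_ne {f : ℝ → ℝ} {a : ℝ} (ha : ContinuousAt f a)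
    (hf' : ∀ x, x ≠ a → 0 < deriv f x) : StrictMono f := by
  have hf : Continuous f := continuous_iff_continuousAt.mpr fun x ↦ by
    rcases eq_or_ne x a with rfl | hx
    · exact ha
    · exact (differentiableAt_of_deriv_ne_zero (hf' x hx).ne').continuousAt
  have left : StrictMonoOn f (Set.Iic a) :=
    strictMonoOn_of_deriv_pos (convex_Iic a) hf.continuousOn fun x hx ↦
      hf' x (by rw [interior_Iic] at hx; exact hx.ne)
  have right : StrictMonoOn f (Set.Ici a) :=
    strictMonoOn_of_deriv_pos (convex_Ici a) hf.continuousOn fun x hx ↦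
      hf' x (by rw [interior_Ici] at hx; exact hx.ne')
  exact left.Iic_union_Ici right

theorem hasDerivAt_exp_mul_div {g : ℝ → ℝ} {g' s : ℝ} (c : ℝ) (hg : HasDerivAt g g' s)
    (hs : g s ≠ 0) :
    HasDerivAt (fun t ↦ exp (c * t) / g t) (exp (c * s) * (c * g s - g') / g s ^ 2) s := by
  have hexp : HasDerivAt (fun t ↦ exp (c * t)) (exp (c * s) * c) s := by
    simpa using ((hasDerivAt_id s).const_mul c).exp
  exact (hexp.fun_div hg hs).congr_deriv (by ring)

theorem two_mul_lt_mul_sq_add {K : Type*} [Field K] [LinearOrder K] [IsStrictOrderedRing K]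
    {c d s : K} (hc : 0 < c) (hcd : 1 ≤ c ^ 2 * d) (hs : s ≠ c⁻¹) :
    2 * s < c * (s ^ 2 + d) := by
  have hcs : c * s - 1 ≠ 0 := fun h ↦ hs (eq_inv_of_mul_eq_one_right (sub_eq_zero.mp h))
  have hpos : 0 < c * (c * (s ^ 2 + d) - 2 * s) :=
    calc
      0 < (c * s - 1) ^ 2 + (c ^ 2 * d - 1) :=
        add_pos_of_pos_of_nonneg (sq_pos_of_ne_zero hcs) (sub_nonneg.mpr hcd)
      _ = c * (c * (s ^ 2 + d) - 2 * s) := by ring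
  exact sub_pos.mp (pos_of_mul_pos_right hpos hc.le)

/-- For `α > 0`, `d₀ > 0` with `4α²d₀ ≥ 1`, the SS-protocol squared channel gain
`s ↦ exp(2αs)/(s² + d₀)` is strictly increasing on all of `ℝ`. -/
theorem ss_gain_strictMono (α d₀ : ℝ) (hα : 0 < α) (hd : 0 < d₀)
    (h : 4 * α ^ 2 * d₀ ≥ 1) :
    StrictMono (fun s : ℝ => Real.exp (2 * α * s) / (s ^ 2 + d₀)) := by
  have hden (s : ℝ) : 0 < s ^ 2 + d₀ := by positivity
  have hden' (s : ℝ) : HasDerivAt (fun t : ℝ ↦ t ^ 2 + d₀) (2 * s) s := by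
    simpa using (hasDerivAt_pow 2 s).add_const d₀
  have hgain (s : ℝ) := hasDerivAt_exp_mul_div (2 * α) (hden' s) (hden s).ne'
  have hc : 0 < 2 * α := by positivity
  have hcd : 1 ≤ (2 * α) ^ 2 * d₀ := by linarith
  refine strictMono_of_deriv_pos_of_ne (hgain (2 * α)⁻¹).continuousAt fun s hs ↦ ?_
  have hquad : 0 < 2 * α * (s ^ 2 + d₀) - 2 * s := sub_pos.mpr (two_mul_lt_mul_sq_add hc hcd hs)
  rw [(hgain s).deriv]
  exact div_pos (mul_pos (exp_pos _) hquad) (pow_pos (hden s) 2)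
end

section
/- Let α > 0 and d₀ > 0 be real numbers with 4·α²·d₀ < 1, and set s₋ = (1 - √(1 - 4·α²·d₀))/(2·α) and s₊ = (1 + √(1 - 4·α²·d₀))/(2·α). Then the function f(s) = exp(2·α·s)/(s² + d₀) is strictly increasing on (-∞, s₋] and strictly decreasing on [s₋, s₊]; in particular, f has a local maximum at s₋. -/
open Real Set

/-!
The derivative of `exp (2αs) / (s² + d₀)` is a positive multiple of the quadratic
`αs² - s + αd₀`, whose discriminant is `1 - 4α²d₀` and whose roots are therefore `s₋ < s₊`.
Hence the gain increases to the left of `s₋` and decreases between the two roots.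
-/

theorem quadratic_eq_mul_sub_mul_sub {K : Type*} [Field K] [NeZero (2 : K)] {a b c r : K}
    (ha : a ≠ 0) (h : discrim a b c = r * r) (x : K) :
    a * (x * x) + b * x + c =
      a * ((x - (-b - r) / (2 * a)) * (x - (-b + r) / (2 * a))) := by
  rw [discrim] at h
  field_simp
  linear_combination -h

section TwoCriticalPoints

variable {f g : ℝ → ℝ} {a b : ℝ}

theorem strictMonoOn_Iic_of_hasDerivAt_mul_sub_mul_sub (hab : a ≤ b)
    (hf : ContinuousOn f (Iic a))
    (hf' : ∀ x < a, HasDerivAt f (g x * ((x - a) * (x - b))) x) (hg : ∀ x < a, 0 < g x) :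
    StrictMonoOn f (Iic a) := by
  refine strictMonoOn_of_deriv_pos (convex_Iic a) hf fun x hx ↦ ?_
  rw [interior_Iic, mem_Iio] at hx
  rw [(hf' x hx).deriv]
  exact mul_pos (hg x hx) (mul_pos_of_neg_of_neg (sub_neg.2 hx) (sub_neg.2 (hx.trans_le hab)))

theorem strictAntiOn_Icc_of_hasDerivAt_mul_sub_mul_sub (hf : ContinuousOn f (Icc a b))
    (hf' : ∀ x ∈ Ioo a b, HasDerivAt f (g x * ((x - a) * (x - b))) x)
    (hg : ∀ x ∈ Ioo a b, 0 < g x) :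
    StrictAntiOn f (Icc a b) := by
  refine strictAntiOn_of_deriv_neg (convex_Icc a b) hf fun x hx ↦ ?_
  rw [interior_Icc] at hx
  rw [(hf' x hx).deriv]
  exact mul_neg_of_pos_of_neg (hg x hx)
    (mul_neg_of_pos_of_neg (sub_pos.2 hx.1) (sub_neg.2 hx.2))

end TwoCriticalPoints

theorem hasDerivAt_exp_mul_div_s8 {q : ℝ → ℝ} {q' x : ℝ} (c : ℝ) (hq : HasDerivAt q q' x)
    (hx : q x ≠ 0) :
    HasDerivAt (fun y ↦ exp (c * y) / q y) (exp (c * x) / q x ^ 2 * (c * q x - q')) x := by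
  have hexp : HasDerivAt (fun y ↦ exp (c * y)) (exp (c * x) * c) x := by
    simpa using ((hasDerivAt_id x).const_mul c).exp
  exact (hexp.div hq hx).congr_deriv (by ring)

theorem hasDerivAt_exp_mul_div_sq_add {α d r s : ℝ} (hα : α ≠ 0)
    (hr : r ^ 2 = 1 - 4 * α ^ 2 * d) (hs : s ^ 2 + d ≠ 0) :
    HasDerivAt (fun s ↦ exp (2 * α * s) / (s ^ 2 + d))
      (2 * α * exp (2 * α * s) / (s ^ 2 + d) ^ 2 *
        ((s - (1 - r) / (2 * α)) * (s - (1 + r) / (2 * α)))) s := by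
  have hfactor : α * (s * s) + -1 * s + α * d =
      α * ((s - (1 - r) / (2 * α)) * (s - (1 + r) / (2 * α))) := by
    have hdiscrim : discrim α (-1) (α * d) = r * r := by
      rw [discrim]
      linear_combination -hr
    simpa only [neg_neg] using quadratic_eq_mul_sub_mul_sub hα hdiscrim s
  have hq : HasDerivAt (fun s : ℝ ↦ s ^ 2 + d) (2 * s) s := by
    simpa using (hasDerivAt_pow 2 s).add_const d
  refine (hasDerivAt_exp_mul_div_s8 (2 * α) hq hs).congr_deriv ?_
  linear_combination 2 * exp (2 * α * s) / (s ^ 2 + d) ^ 2 * hfactor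

/-- For `α > 0`, `d₀ > 0` with `4α²d₀ < 1`, setting
`s₋ = (1 - √(1 - 4α²d₀))/(2α)` and `s₊ = (1 + √(1 - 4α²d₀))/(2α)`,
the SS-protocol squared channel gain `f(s) = exp(2αs)/(s² + d₀)` is strictly
increasing on `(-∞, s₋]` and strictly decreasing on `[s₋, s₊]`; in particular,
`f` has a local maximum at `s₋`. -/
theorem ss_gain_optimal_position (α d₀ : ℝ) (hα : 0 < α) (hd : 0 < d₀)
    (h : 4 * α ^ 2 * d₀ < 1) :
    StrictMonoOn (fun s : ℝ => Real.exp (2 * α * s) / (s ^ 2 + d₀))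
        (Iic ((1 - Real.sqrt (1 - 4 * α ^ 2 * d₀)) / (2 * α))) ∧
      StrictAntiOn (fun s : ℝ => Real.exp (2 * α * s) / (s ^ 2 + d₀))
        (Icc ((1 - Real.sqrt (1 - 4 * α ^ 2 * d₀)) / (2 * α))
          ((1 + Real.sqrt (1 - 4 * α ^ 2 * d₀)) / (2 * α))) ∧
      IsLocalMax (fun s : ℝ => Real.exp (2 * α * s) / (s ^ 2 + d₀))
        ((1 - Real.sqrt (1 - 4 * α ^ 2 * d₀)) / (2 * α)) := by
  have hsqrt_pos : 0 < √(1 - 4 * α ^ 2 * d₀) := sqrt_pos.2 (by linarith)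
  have hsqrt_sq : √(1 - 4 * α ^ 2 * d₀) ^ 2 = 1 - 4 * α ^ 2 * d₀ := sq_sqrt (by linarith)
  have hroots : (1 - √(1 - 4 * α ^ 2 * d₀)) / (2 * α) < (1 + √(1 - 4 * α ^ 2 * d₀)) / (2 * α) := by
    gcongr
    linarith
  have hderiv (s : ℝ) := hasDerivAt_exp_mul_div_sq_add (s := s) hα.ne' hsqrt_sq (by positivity)
  have hweight (s : ℝ) : 0 < 2 * α * exp (2 * α * s) / (s ^ 2 + d₀) ^ 2 := by positivity
  have hmono := strictMonoOn_Iic_of_hasDerivAt_mul_sub_mul_sub hroots.le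
    (HasDerivAt.continuousOn fun s _ ↦ hderiv s) (fun s _ ↦ hderiv s) fun s _ ↦ hweight s
  have hanti := strictAntiOn_Icc_of_hasDerivAt_mul_sub_mul_sub
    (HasDerivAt.continuousOn fun s _ ↦ hderiv s) (fun s _ ↦ hderiv s) fun s _ ↦ hweight s
  exact ⟨hmono, hanti, isLocalMax_of_mono_anti' self_mem_nhdsWithin
    (Icc_mem_nhdsGE hroots) hmono.monotoneOn hanti.antitoneOn⟩
end
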